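/- Assume the all-ones vector 1 lies in the column span of Φ. Let G = {π ∈ Π_D : π is greedy with respect to some v ∈ Ṽ}, let Π̃ satisfy G ⊆ Π̃ ⊆ Π_R, and let π̄ ∈ Π̃ satisfy ρ̃(π̄) ≥ ρ̃(π) for all π ∈ Π̃. Then for every v ∈ Ṽ: ‖v* − v_π̄‖_{1,α} ≤ (2/(1−γ))·‖v − Lv‖_∞, where ‖x‖_{1,α} = ∑_s α(s)·|x(s)| and ‖x‖_∞ = max_s |x(s)|. -/

import Mathlib

/-!
Every `u ∈ Ũ(π)` satisfies `uᵀAv = (1−γ)αᵀv` for `v ∈ Ṽ`, and the true occupancy frequency `u_π`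
lies in `Ũ(π)`. Testing the inner supremum at `u_π` gives `ρ̃(π) ≤ ρ(π)` for every policy. When `π`
is greedy for `v ∈ Ṽ`, the constraint `u ≤ π` makes `Ũ(π)` see only the Bellman residual `v − Lv`,
and `1 ∈ Ṽ` bounds the mass of `u`, so `ρ̃(π) ≥ αᵀv − ‖v − Lv‖_∞/(1−γ)`. The optimality of `π̄`
transfers this lower bound to `ρ(π̄)`. Shifting `v` up by `‖v − Lv‖_∞/(1−γ)` makes it a
supersolution of the Bellman equation, hence an upper bound for `v*`; since `v_π̄ ≤ v*`, the loss is
`αᵀv* − ρ(π̄)` and the two errors add up to the factor `2`.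

For a substochastic `M` and `0 ≤ γ < 1` the matrix `1 − γM` is inverse-positive by a minimum
principle; all comparisons of value functions come from this.
-/

open Matrix BigOperators

namespace DRADP

variable {S A K : Type*} [Fintype S] [Fintype A] [Fintype K] [DecidableEq S] [DecidableEq A]

/-- A randomized policy: nonnegative with rows summing to one. -/
def isPolicy (π : S → A → ℝ) : Prop :=
  (∀ s a, 0 ≤ π s a) ∧ ∀ s, ∑ a, π s a = 1

/-- The randomized policy corresponding to a deterministic policy `p : S → A`. -/
def detPol (p : S → A) : S → A → ℝ := fun s a => if a = p s then 1 else 0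

/-- Transition matrix `P_π` of a policy. -/
noncomputable def Pmat (P : S → A → S → ℝ) (π : S → A → ℝ) : Matrix S S ℝ :=
  Matrix.of fun s s' => ∑ a, P s a s' * π s a

/-- Reward vector `r_π` of a policy. -/
noncomputable def rvec (r : S → A → ℝ) (π : S → A → ℝ) : S → ℝ :=
  fun s => ∑ a, r s a * π s a

/-- State occupancy frequency `d_π = (1-γ)·∑_t γ^t (P_πᵀ)^t α`. -/
noncomputable def dOcc (P : S → A → S → ℝ) (α : S → ℝ) (γ : ℝ) (π : S → A → ℝ) : S → ℝ :=
  fun s => (1 - γ) * ∑' t : ℕ, γ ^ t * (((Pmat P π)ᵀ ^ t) *ᵥ α) s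

/-- State-action occupancy frequency `u_π(s,a) = d_π(s)·π(s,a)`. -/
noncomputable def uOcc (P : S → A → S → ℝ) (α : S → ℝ) (γ : ℝ) (π : S → A → ℝ) : S × A → ℝ :=
  fun w => dOcc P α γ π w.1 * π w.1 w.2

/-- Value function `v_π = ∑_t γ^t P_π^t r_π`. -/
noncomputable def vVal (P : S → A → S → ℝ) (r : S → A → ℝ) (γ : ℝ) (π : S → A → ℝ) : S → ℝ :=
  fun s => ∑' t : ℕ, γ ^ t * ((Pmat P π ^ t) *ᵥ rvec r π) s

/-- The return `ρ(π) = αᵀ v_π`. -/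
noncomputable def ret (P : S → A → S → ℝ) (r : S → A → ℝ) (α : S → ℝ) (γ : ℝ)
    (π : S → A → ℝ) : ℝ :=
  ∑ s, α s * vVal P r γ π s

/-- The matrix `A` with rows `A((s,a),·) = e_sᵀ − γ·P(s,a,·)`. -/
def Amat (P : S → A → S → ℝ) (γ : ℝ) : Matrix (S × A) S ℝ :=
  Matrix.of fun w s' => (if w.1 = s' then (1 : ℝ) else 0) - γ * P w.1 w.2 s'

/-- The vector `b(s,a) = r(s,a)`. -/
def bvec (r : S → A → ℝ) : S × A → ℝ := fun w => r w.1 w.2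

/-- `U = {u : u ≥ 0, Aᵀu = (1−γ)·α}`. -/
def Uset (P : S → A → S → ℝ) (α : S → ℝ) (γ : ℝ) : Set (S × A → ℝ) :=
  {u | (∀ w, 0 ≤ u w) ∧ (Amat P γ)ᵀ *ᵥ u = fun s => (1 - γ) * α s}

/-- The Bellman operator `L`. -/
noncomputable def bell (P : S → A → S → ℝ) (r : S → A → ℝ) (γ : ℝ) (v : S → ℝ) : S → ℝ :=
  fun s => ⨆ a : A, (r s a + γ * ∑ s', P s a s' * v s')

/-- A deterministic policy `p` is greedy w.r.t. `v`. -/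
def isGreedy (P : S → A → S → ℝ) (r : S → A → ℝ) (γ : ℝ) (p : S → A) (v : S → ℝ) : Prop :=
  ∀ s a, r s a + γ * ∑ s', P s a s' * v s' ≤ r s (p s) + γ * ∑ s', P s (p s) s' * v s'

/-- Approximate occupancy frequencies `Ũ(π)`. -/
def Utilde (P : S → A → S → ℝ) (α : S → ℝ) (γ : ℝ) (Φ : Matrix S K ℝ) (π : S → A → ℝ) :
    Set (S × A → ℝ) :=
  {u | (∀ w, 0 ≤ u w) ∧
    (Φᵀ *ᵥ ((Amat P γ)ᵀ *ᵥ u) = fun j => (1 - γ) * (Φᵀ *ᵥ α) j) ∧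
    ∀ w, u w ≤ π w.1 w.2}

/-- The distributionally robust return estimate
`ρ̃(π) = sup_{v∈Ṽ} (αᵀv − sup_{u∈Ũ(π)} uᵀ(Av − b)/(1−γ))`. -/
noncomputable def rhoTilde (P : S → A → S → ℝ) (r : S → A → ℝ) (α : S → ℝ) (γ : ℝ)
    (Φ : Matrix S K ℝ) (π : S → A → ℝ) : ℝ :=
  ⨆ x : K → ℝ, (∑ s, α s * (Φ *ᵥ x) s -
    sSup ((fun u : S × A → ℝ =>
      (∑ w, u w * ((Amat P γ *ᵥ (Φ *ᵥ x)) w - bvec r w)) / (1 - γ)) ''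
      Utilde P α γ Φ π))

/-- The set `G` of deterministic policies greedy w.r.t. some representable value function. -/
def greedySet (P : S → A → S → ℝ) (r : S → A → ℝ) (γ : ℝ) (Φ : Matrix S K ℝ) :
    Set (S → A → ℝ) :=
  {π | ∃ p : S → A, π = detPol p ∧ ∃ x : K → ℝ, isGreedy P r γ p (Φ *ᵥ x)}

end DRADP

open DRADP

namespace DRADP

section Matrix

variable {n R : Type*} [Fintype n]

theorem one_sub_smul_mulVec_apply [DecidableEq n] [CommRing R]
    (M : Matrix n n R) (γ : R) (f : n → R) (i : n) :
    ((1 - γ • M) *ᵥ f) i = f i - γ * (M *ᵥ f) i := by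
  simp [sub_mulVec, smul_mulVec]

theorem pow_mulVec_nonneg [DecidableEq n] [Semiring R] [PartialOrder R] [IsOrderedRing R]
    {M : Matrix n n R} {f : n → R} (hM : ∀ i j, 0 ≤ M i j) (hf : 0 ≤ f) (t : ℕ) :
    0 ≤ M ^ t *ᵥ f := by
  induction t with
  | zero => simpa using hf
  | succ t ih =>
    rw [pow_succ', ← mulVec_mulVec]
    exact fun i => dotProduct_nonneg_of_nonneg (hM i) ih

theorem one_sub_smul_mulVec_tsum [DecidableEq n] [CommRing R] [TopologicalSpace R]
    [IsTopologicalRing R] [T2Space R] {M : Matrix n n R} {γ : R}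
    (h : Summable fun t : ℕ => (γ • M) ^ t) (f : n → R) :
    ((1 - γ • M) *ᵥ fun i => ∑' t : ℕ, γ ^ t * (M ^ t *ᵥ f) i) = f := by
  have hsum : HasSum (fun t : ℕ => (γ • M) ^ t *ᵥ f) ((∑' t : ℕ, (γ • M) ^ t) *ᵥ f) :=
    h.hasSum.map (mulVec.addMonoidHomLeft f) (continuous_id.matrix_mulVec continuous_const)
  have hcoord : (fun i => ∑' t : ℕ, γ ^ t * (M ^ t *ᵥ f) i) = (∑' t : ℕ, (γ • M) ^ t) *ᵥ f := by
    ext i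
    rw [← (Pi.hasSum.1 hsum i).tsum_eq]
    simp only [smul_pow, smul_mulVec, Pi.smul_apply, smul_eq_mul]
  rw [hcoord, mulVec_mulVec, h.one_sub_mul_tsum_pow, one_mulVec]

end Matrix

section Substochastic

variable {m n : Type*} [Fintype n]

/-- A nonnegative matrix whose row sums are at most one: the transition kernels of processes that
may be killed, each missing row mass being the probability of termination. -/
structure IsSubstochastic (M : Matrix m n ℝ) : Prop where
  nonneg : ∀ i j, 0 ≤ M i j
  sum_row_le_one : ∀ i, ∑ j, M i j ≤ 1

namespace IsSubstochastic

variable {M : Matrix n n ℝ} {γ : ℝ}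

open scoped Matrix.Norms.Operator in
theorem norm_le_one [Fintype m] {M : Matrix m n ℝ} (hM : IsSubstochastic M) : ‖M‖ ≤ 1 := by
  rw [linfty_opNorm_def]
  refine NNReal.coe_le_one.2 (Finset.sup_le fun i _ => NNReal.coe_le_coe.1 ?_)
  simpa [abs_of_nonneg (hM.nonneg i _)] using hM.sum_row_le_one i

open scoped Matrix.Norms.Operator in
theorem summable_smul_pow [DecidableEq n] (hM : IsSubstochastic M) (hγ0 : 0 ≤ γ) (hγ1 : γ < 1) :
    Summable fun t : ℕ => (γ • M) ^ t := by
  refine summable_geometric_of_norm_lt_one ?_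
  calc ‖γ • M‖ = γ * ‖M‖ := by rw [norm_smul, Real.norm_of_nonneg hγ0]
    _ ≤ γ * 1 := by gcongr; exact hM.norm_le_one
    _ < 1 := by rwa [mul_one]

theorem nonneg_of_one_sub_smul_mulVec_nonneg [DecidableEq n] (hM : IsSubstochastic M)
    (hγ0 : 0 ≤ γ) (hγ1 : γ < 1) {w : n → ℝ} (hw : 0 ≤ (1 - γ • M) *ᵥ w) : 0 ≤ w := by
  by_contra hneg
  obtain ⟨i, hi⟩ : ∃ i, w i < 0 := by simpa [Pi.le_def] using hneg
  have : Nonempty n := ⟨i⟩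
  obtain ⟨k, hk⟩ := Finite.exists_min w
  have hk0 : w k < 0 := (hk i).trans_lt hi
  have hmin : w k ≤ (M *ᵥ w) k :=
    calc w k ≤ (∑ j, M k j) * w k := le_mul_of_le_one_left hk0.le (hM.sum_row_le_one k)
      _ = ∑ j, M k j * w k := Finset.sum_mul ..
      _ ≤ (M *ᵥ w) k :=
        Finset.sum_le_sum fun j _ => mul_le_mul_of_nonneg_left (hk j) (hM.nonneg k j)
  have hwk : γ * (M *ᵥ w) k ≤ w k := by
    simpa only [one_sub_smul_mulVec_apply, Pi.zero_apply, sub_nonneg] using hw k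
  nlinarith [mul_le_mul_of_nonneg_left hmin hγ0]

theorem one_sub_le_one_sub_smul_mulVec_one [DecidableEq n] (hM : IsSubstochastic M) (hγ0 : 0 ≤ γ)
    (i : n) : 1 - γ ≤ ((1 - γ • M) *ᵥ 1) i := by
  have hsum : (M *ᵥ 1) i ≤ 1 := by
    simpa only [mulVec, dotProduct_one] using hM.sum_row_le_one i
  rw [one_sub_smul_mulVec_apply, Pi.one_apply]
  linarith [mul_le_of_le_one_right hγ0 hsum]

end IsSubstochastic

end Substochastic

variable {S A K : Type*}
  {P : S → A → S → ℝ} {r : S → A → ℝ} {α : S → ℝ} {γ : ℝ} {Φ : Matrix S K ℝ}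
  {π : S → A → ℝ} {p : S → A} {v w : S → ℝ} {ε : ℝ}

theorem isPolicy_detPol [Fintype A] [DecidableEq A] (p : S → A) : isPolicy (detPol p) :=
  ⟨fun s a => by unfold detPol; split_ifs <;> norm_num, fun s => by simp [detPol]⟩

variable [Fintype S]

theorem Amat_mulVec_apply [DecidableEq S] (P : S → A → S → ℝ) (γ : ℝ) (v : S → ℝ) (s : S) (a : A) :
    (Amat P γ *ᵥ v) (s, a) = v s - γ * ∑ s', P s a s' * v s' := by
  simp [Amat, mulVec, dotProduct, sub_mul, Finset.sum_sub_distrib, Finset.mul_sum, mul_assoc]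

theorem one_sub_le_Amat_mulVec_one [DecidableEq S] (hP : ∀ s, IsSubstochastic (of (P s)))
    (hγ0 : 0 ≤ γ) (sa : S × A) : 1 - γ ≤ (Amat P γ *ᵥ 1) sa := by
  have hmass : ∑ s', P sa.1 sa.2 s' ≤ 1 := (hP sa.1).sum_row_le_one sa.2
  rw [Amat_mulVec_apply]
  simp only [Pi.one_apply, mul_one]
  linarith [mul_le_of_le_one_right hγ0 hmass]

section Bellman

theorem isGreedy.bell_apply (hp : isGreedy P r γ p v) (s : S) :
    bell P r γ v s = r s (p s) + γ * ∑ s', P s (p s) s' * v s' :=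
  have : Nonempty A := ⟨p s⟩
  le_antisymm (ciSup_le (hp s)) (le_ciSup ⟨_, Set.forall_mem_range.2 (hp s)⟩ (p s))

theorem isGreedy.Amat_mulVec_sub_bvec [DecidableEq S] (hp : isGreedy P r γ p v) (s : S) :
    (Amat P γ *ᵥ v) (s, p s) - bvec r (s, p s) = v s - bell P r γ v s := by
  rw [Amat_mulVec_apply, bvec, hp.bell_apply]
  ring

variable [Finite A]

theorem le_bell (P : S → A → S → ℝ) (r : S → A → ℝ) (γ : ℝ) (v : S → ℝ) (s : S) (a : A) :
    r s a + γ * ∑ s', P s a s' * v s' ≤ bell P r γ v s :=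
  le_ciSup (f := fun a => r s a + γ * ∑ s', P s a s' * v s') (Set.finite_range _).bddAbove a

theorem exists_isGreedy [Nonempty A] (P : S → A → S → ℝ) (r : S → A → ℝ) (γ : ℝ) (v : S → ℝ) :
    ∃ p : S → A, isGreedy P r γ p v := by
  choose p hp using fun s => Finite.exists_max fun a => r s a + γ * ∑ s', P s a s' * v s'
  exact ⟨p, hp⟩

theorem bell_add_const_le [Nonempty A] (hP : ∀ s, IsSubstochastic (of (P s))) (hγ0 : 0 ≤ γ)
    {c : ℝ} (hc : 0 ≤ c) (s : S) :
    bell P r γ (fun s' => v s' + c) s ≤ bell P r γ v s + γ * c := by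
  refine ciSup_le fun a => ?_
  have hmass : (∑ s', P s a s') * c ≤ c := mul_le_of_le_one_left hc ((hP s).sum_row_le_one a)
  have hback := le_bell P r γ v s a
  simp only [mul_add, Finset.sum_add_distrib, ← Finset.sum_mul]
  linarith [mul_le_mul_of_nonneg_left hmass hγ0]

theorem sub_bell_le_Amat_mulVec_sub_bvec [DecidableEq S] (P : S → A → S → ℝ) (r : S → A → ℝ)
    (γ : ℝ) (v : S → ℝ) (s : S) (a : A) :
    v s - bell P r γ v s ≤ (Amat P γ *ᵥ v) (s, a) - bvec r (s, a) := by
  rw [Amat_mulVec_apply, bvec]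
  linarith [le_bell P r γ v s a]

end Bellman

section Policy

variable [Fintype A]

theorem isPolicy.isSubstochastic_Pmat (hπ : isPolicy π) (hP : ∀ s, IsSubstochastic (of (P s))) :
    IsSubstochastic (Pmat P π) where
  nonneg s s' := Finset.sum_nonneg fun a _ => mul_nonneg ((hP s).nonneg a s') (hπ.1 s a)
  sum_row_le_one s :=
    calc ∑ s', ∑ a, P s a s' * π s a = ∑ a, (∑ s', P s a s') * π s a := by
          rw [Finset.sum_comm]; simp only [Finset.sum_mul]
      _ ≤ ∑ a, π s a := Finset.sum_le_sum fun a _ =>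
          mul_le_of_le_one_left (hπ.1 s a) ((hP s).sum_row_le_one a)
      _ = 1 := hπ.2 s

theorem Pmat_mulVec_apply (P : S → A → S → ℝ) (π : S → A → ℝ) (v : S → ℝ) (s : S) :
    (Pmat P π *ᵥ v) s = ∑ a, π s a * ∑ s', P s a s' * v s' := by
  simp only [Pmat, mulVec, dotProduct, of_apply, Finset.sum_mul, Finset.mul_sum]
  rw [Finset.sum_comm]
  exact Finset.sum_congr rfl fun a _ => Finset.sum_congr rfl fun s' _ => by ring

variable [DecidableEq S]

theorem isPolicy.sum_mul_Amat_mulVec (hπ : isPolicy π) (P : S → A → S → ℝ) (γ : ℝ) (v : S → ℝ)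
    (s : S) :
    ∑ a, π s a * (Amat P γ *ᵥ v) (s, a) = ((1 - γ • Pmat P π) *ᵥ v) s := by
  rw [one_sub_smul_mulVec_apply, Pmat_mulVec_apply]
  simp only [Amat_mulVec_apply, mul_sub, Finset.sum_sub_distrib, ← Finset.sum_mul, hπ.2, one_mul,
    Finset.mul_sum, mul_left_comm γ]

theorem isPolicy.sum_mul_Amat_mulVec_sub_bvec (hπ : isPolicy π) (P : S → A → S → ℝ)
    (r : S → A → ℝ) (γ : ℝ) (v : S → ℝ) (s : S) :
    ∑ a, π s a * ((Amat P γ *ᵥ v) (s, a) - bvec r (s, a)) =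
      ((1 - γ • Pmat P π) *ᵥ v) s - rvec r π s := by
  simp only [mul_sub, Finset.sum_sub_distrib, hπ.sum_mul_Amat_mulVec, bvec, rvec, mul_comm (r s _)]

theorem isPolicy.rvec_le_of_bell_le (hπ : isPolicy π) (hw : bell P r γ w ≤ w) :
    rvec r π ≤ (1 - γ • Pmat P π) *ᵥ w := fun s => by
  rw [← sub_nonneg, ← hπ.sum_mul_Amat_mulVec_sub_bvec]
  exact Finset.sum_nonneg fun a _ => mul_nonneg (hπ.1 s a) <|
    (sub_nonneg.2 (hw s)).trans (sub_bell_le_Amat_mulVec_sub_bvec P r γ w s a)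

theorem isPolicy.le_of_bell_le (hπ : isPolicy π) (hP : ∀ s, IsSubstochastic (of (P s)))
    (hγ0 : 0 ≤ γ) (hγ1 : γ < 1) (hv : (1 - γ • Pmat P π) *ᵥ v ≤ rvec r π)
    (hw : bell P r γ w ≤ w) : v ≤ w := by
  rw [← sub_nonneg]
  refine (hπ.isSubstochastic_Pmat hP).nonneg_of_one_sub_smul_mulVec_nonneg hγ0 hγ1 ?_
  rw [mulVec_sub, sub_nonneg]
  exact hv.trans (hπ.rvec_le_of_bell_le hw)

theorem isGreedy.one_sub_smul_Pmat_mulVec [DecidableEq A] (hp : isGreedy P r γ p v)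
    (hv : bell P r γ v = v) : (1 - γ • Pmat P (detPol p)) *ᵥ v = rvec r (detPol p) := by
  ext s
  rw [← sub_eq_zero, ← (isPolicy_detPol p).sum_mul_Amat_mulVec_sub_bvec]
  simp [detPol, hp.Amat_mulVec_sub_bvec, hv]

end Policy

section Comparison

variable [Finite A] [Nonempty A]

theorem le_add_div_of_bell_eq (hP : ∀ s, IsSubstochastic (of (P s)))
    (hγ0 : 0 ≤ γ) (hγ1 : γ < 1) (hv : bell P r γ v = v) (hε : 0 ≤ ε)
    (hw : ∀ s, bell P r γ w s - w s ≤ ε) (s : S) : v s ≤ w s + ε / (1 - γ) := by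
  classical
  have := Fintype.ofFinite A
  have hγ : 0 < 1 - γ := sub_pos.2 hγ1
  obtain ⟨p, hp⟩ := exists_isGreedy P r γ v
  suffices hsuper : bell P r γ (fun s => w s + ε / (1 - γ)) ≤ fun s => w s + ε / (1 - γ) from
    (isPolicy_detPol p).le_of_bell_le hP hγ0 hγ1 (hp.one_sub_smul_Pmat_mulVec hv).le hsuper s
  intro s
  have hshift : ε + γ * (ε / (1 - γ)) = ε / (1 - γ) := by field_simp; ring
  linarith [hw s, bell_add_const_le (r := r) (v := w) hP hγ0 (div_nonneg hε hγ.le) s]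

theorem dotProduct_le_add_div_of_bell_eq
    (hP : ∀ s, IsSubstochastic (of (P s))) (hα : 0 ≤ α) (hαsum : ∑ s, α s ≤ 1) (hγ0 : 0 ≤ γ)
    (hγ1 : γ < 1) (hv : bell P r γ v = v) (hε : 0 ≤ ε) (hw : ∀ s, bell P r γ w s - w s ≤ ε) :
    α ⬝ᵥ v ≤ α ⬝ᵥ w + ε / (1 - γ) :=
  calc α ⬝ᵥ v ≤ ∑ s, α s * (w s + ε / (1 - γ)) :=
        dotProduct_le_dotProduct_of_nonneg_left (le_add_div_of_bell_eq hP hγ0 hγ1 hv hε hw) hα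
    _ = α ⬝ᵥ w + (∑ s, α s) * (ε / (1 - γ)) := by
        simp only [mul_add, Finset.sum_add_distrib, Finset.sum_mul, dotProduct]
    _ ≤ α ⬝ᵥ w + ε / (1 - γ) := by
        gcongr
        exact mul_le_of_le_one_left (div_nonneg hε (sub_nonneg.2 hγ1.le)) hαsum

end Comparison

section Occupancy

variable [Fintype A] [DecidableEq S]

theorem isPolicy.one_sub_smul_Pmat_mulVec_vVal (hπ : isPolicy π)
    (hP : ∀ s, IsSubstochastic (of (P s))) (hγ0 : 0 ≤ γ) (hγ1 : γ < 1) (r : S → A → ℝ) :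
    (1 - γ • Pmat P π) *ᵥ vVal P r γ π = rvec r π :=
  one_sub_smul_mulVec_tsum ((hπ.isSubstochastic_Pmat hP).summable_smul_pow hγ0 hγ1) _

theorem isPolicy.vVal_le_of_bell_le (hπ : isPolicy π) (hP : ∀ s, IsSubstochastic (of (P s)))
    (hγ0 : 0 ≤ γ) (hγ1 : γ < 1) (hw : bell P r γ w ≤ w) : vVal P r γ π ≤ w :=
  hπ.le_of_bell_le hP hγ0 hγ1 (hπ.one_sub_smul_Pmat_mulVec_vVal hP hγ0 hγ1 r).le hw

theorem isPolicy.sum_mul_abs_sub_vVal (hπ : isPolicy π) (hP : ∀ s, IsSubstochastic (of (P s)))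
    (hγ0 : 0 ≤ γ) (hγ1 : γ < 1) (hw : bell P r γ w ≤ w) (α : S → ℝ) :
    ∑ s, α s * |w s - vVal P r γ π s| = α ⬝ᵥ w - ret P r α γ π := by
  have hle (s : S) : 0 ≤ w s - vVal P r γ π s :=
    sub_nonneg.2 (hπ.vVal_le_of_bell_le hP hγ0 hγ1 hw s)
  simp only [abs_of_nonneg (hle _), mul_sub, Finset.sum_sub_distrib, dotProduct, ret]

theorem isPolicy.dOcc_vecMul_one_sub_smul_Pmat (hπ : isPolicy π)
    (hP : ∀ s, IsSubstochastic (of (P s))) (hγ0 : 0 ≤ γ) (hγ1 : γ < 1) (α : S → ℝ) :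
    dOcc P α γ π ᵥ* (1 - γ • Pmat P π) = (1 - γ) • α := by
  have hsum : Summable fun t : ℕ => (γ • (Pmat P π)ᵀ) ^ t := by
    simpa only [transpose_pow, transpose_smul] using
      ((hπ.isSubstochastic_Pmat hP).summable_smul_pow hγ0 hγ1).matrix_transpose
  have hd : dOcc P α γ π =
      (1 - γ) • fun s => ∑' t : ℕ, γ ^ t * ((Pmat P π)ᵀ ^ t *ᵥ α) s := rfl
  rw [hd, smul_vecMul, ← mulVec_transpose, transpose_sub, transpose_smul, transpose_one,
    one_sub_smul_mulVec_tsum hsum]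

theorem isPolicy.dOcc_nonneg (hπ : isPolicy π) (hP : ∀ s, IsSubstochastic (of (P s)))
    (hα : 0 ≤ α) (hγ0 : 0 ≤ γ) (hγ1 : γ < 1) : 0 ≤ dOcc P α γ π := fun s =>
  mul_nonneg (sub_nonneg.2 hγ1.le) <| tsum_nonneg fun t => mul_nonneg (pow_nonneg hγ0 t) <|
    pow_mulVec_nonneg (fun i j => (hπ.isSubstochastic_Pmat hP).nonneg j i) hα t s

theorem isPolicy.dOcc_le_one (hπ : isPolicy π) (hP : ∀ s, IsSubstochastic (of (P s)))
    (hα : 0 ≤ α) (hαsum : ∑ s, α s ≤ 1) (hγ0 : 0 ≤ γ) (hγ1 : γ < 1) (s : S) :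
    dOcc P α γ π s ≤ 1 := by
  have hd := hπ.dOcc_nonneg hP hα hγ0 hγ1
  have hmass : (∑ s, dOcc P α γ π s) * (1 - γ) ≤ (∑ s, α s) * (1 - γ) :=
    calc (∑ s, dOcc P α γ π s) * (1 - γ)
        ≤ dOcc P α γ π ⬝ᵥ ((1 - γ • Pmat P π) *ᵥ 1) := by
          rw [Finset.sum_mul]
          exact Finset.sum_le_sum fun s _ => mul_le_mul_of_nonneg_left
            ((hπ.isSubstochastic_Pmat hP).one_sub_le_one_sub_smul_mulVec_one hγ0 s) (hd s)
      _ = (∑ s, α s) * (1 - γ) := by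
          rw [dotProduct_mulVec, hπ.dOcc_vecMul_one_sub_smul_Pmat hP hγ0 hγ1, smul_dotProduct,
            dotProduct_one, smul_eq_mul, mul_comm]
  calc dOcc P α γ π s ≤ ∑ s, dOcc P α γ π s :=
        Finset.single_le_sum (fun s _ => hd s) (Finset.mem_univ s)
    _ ≤ ∑ s, α s := le_of_mul_le_mul_right hmass (sub_pos.2 hγ1)
    _ ≤ 1 := hαsum

theorem uOcc_dotProduct (P : S → A → S → ℝ) (α : S → ℝ) (γ : ℝ) (π : S → A → ℝ)
    (g : S × A → ℝ) :
    uOcc P α γ π ⬝ᵥ g = dOcc P α γ π ⬝ᵥ fun s => ∑ a, π s a * g (s, a) := by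
  simp only [dotProduct, uOcc, Fintype.sum_prod_type, Finset.mul_sum, mul_assoc]

theorem isPolicy.uOcc_mem_Uset (hπ : isPolicy π) (hP : ∀ s, IsSubstochastic (of (P s)))
    (hα : 0 ≤ α) (hγ0 : 0 ≤ γ) (hγ1 : γ < 1) : uOcc P α γ π ∈ Uset P α γ := by
  refine ⟨fun sa => mul_nonneg (hπ.dOcc_nonneg hP hα hγ0 hγ1 _) (hπ.1 _ _), dotProduct_eq _ _ ?_⟩
  intro f
  calc ((Amat P γ)ᵀ *ᵥ uOcc P α γ π) ⬝ᵥ f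
      = uOcc P α γ π ⬝ᵥ (Amat P γ *ᵥ f) := by rw [mulVec_transpose, dotProduct_mulVec]
    _ = dOcc P α γ π ⬝ᵥ ((1 - γ • Pmat P π) *ᵥ f) := by
        simp only [uOcc_dotProduct, hπ.sum_mul_Amat_mulVec]
    _ = ((1 - γ) • α) ⬝ᵥ f := by
        rw [dotProduct_mulVec, hπ.dOcc_vecMul_one_sub_smul_Pmat hP hγ0 hγ1]

theorem isPolicy.uOcc_mem_Utilde (hπ : isPolicy π) (hP : ∀ s, IsSubstochastic (of (P s)))
    (hα : 0 ≤ α) (hαsum : ∑ s, α s ≤ 1) (hγ0 : 0 ≤ γ) (hγ1 : γ < 1) (Φ : Matrix S K ℝ) :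
    uOcc P α γ π ∈ Utilde P α γ Φ π := by
  obtain ⟨hu0, hu⟩ := hπ.uOcc_mem_Uset hP hα hγ0 hγ1
  refine ⟨hu0, ?_,
    fun sa => mul_le_of_le_one_left (hπ.1 _ _) (hπ.dOcc_le_one hP hα hαsum hγ0 hγ1 _)⟩
  rw [hu]
  exact mulVec_smul Φᵀ (1 - γ) α

theorem isPolicy.uOcc_dotProduct_bvec (hπ : isPolicy π) (hP : ∀ s, IsSubstochastic (of (P s)))
    (hγ0 : 0 ≤ γ) (hγ1 : γ < 1) (r : S → A → ℝ) (α : S → ℝ) :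
    uOcc P α γ π ⬝ᵥ bvec r = (1 - γ) * ret P r α γ π :=
  calc uOcc P α γ π ⬝ᵥ bvec r = dOcc P α γ π ⬝ᵥ rvec r π := by
        simp only [uOcc_dotProduct, bvec, mul_comm (π _ _)]; rfl
    _ = (1 - γ) * ret P r α γ π := by
        rw [← hπ.one_sub_smul_Pmat_mulVec_vVal hP hγ0 hγ1, dotProduct_mulVec,
          hπ.dOcc_vecMul_one_sub_smul_Pmat hP hγ0 hγ1, smul_dotProduct]
        rfl

end Occupancy

section RobustReturn

variable [Fintype A] [DecidableEq S]

theorem bddAbove_image_Utilde (hγ1 : γ < 1) (g : S × A → ℝ) :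
    BddAbove ((fun u : S × A → ℝ => (∑ sa, u sa * g sa) / (1 - γ)) '' Utilde P α γ Φ π) := by
  refine ⟨(∑ sa : S × A, π sa.1 sa.2 * |g sa|) / (1 - γ), ?_⟩
  rintro _ ⟨u, ⟨hu0, -, huπ⟩, rfl⟩
  refine div_le_div_of_nonneg_right (Finset.sum_le_sum fun sa _ => ?_) (sub_nonneg.2 hγ1.le)
  calc u sa * g sa ≤ u sa * |g sa| := mul_le_mul_of_nonneg_left (le_abs_self _) (hu0 sa)
    _ ≤ π sa.1 sa.2 * |g sa| := mul_le_mul_of_nonneg_right (huπ sa) (abs_nonneg _)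

variable [Fintype K] {u : S × A → ℝ}

theorem dotProduct_Amat_mulVec_of_mem_Utilde (hu : u ∈ Utilde P α γ Φ π) (x : K → ℝ) :
    u ⬝ᵥ (Amat P γ *ᵥ (Φ *ᵥ x)) = (1 - γ) * (α ⬝ᵥ (Φ *ᵥ x)) :=
  calc u ⬝ᵥ (Amat P γ *ᵥ (Φ *ᵥ x)) = (Φᵀ *ᵥ ((Amat P γ)ᵀ *ᵥ u)) ⬝ᵥ x := by
        simp only [dotProduct_mulVec, mulVec_transpose]
    _ = ((1 - γ) • (Φᵀ *ᵥ α)) ⬝ᵥ x := by rw [hu.2.1]; rfl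
    _ = (1 - γ) * (α ⬝ᵥ (Φ *ᵥ x)) := by
        rw [smul_dotProduct, smul_eq_mul, mulVec_transpose, dotProduct_mulVec]

theorem sum_le_one_of_mem_Utilde (hP : ∀ s, IsSubstochastic (of (P s))) (hαsum : ∑ s, α s ≤ 1)
    (hγ0 : 0 ≤ γ) (hγ1 : γ < 1) (hone : ∃ x, Φ *ᵥ x = 1) (hu : u ∈ Utilde P α γ Φ π) :
    ∑ sa, u sa ≤ 1 := by
  obtain ⟨x, hx⟩ := hone
  have hmass : (∑ sa, u sa) * (1 - γ) ≤ (∑ s, α s) * (1 - γ) :=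
    calc (∑ sa, u sa) * (1 - γ) ≤ u ⬝ᵥ (Amat P γ *ᵥ 1) := by
          rw [Finset.sum_mul]
          exact Finset.sum_le_sum fun sa _ =>
            mul_le_mul_of_nonneg_left (one_sub_le_Amat_mulVec_one hP hγ0 sa) (hu.1 sa)
      _ = (∑ s, α s) * (1 - γ) := by
          rw [← hx, dotProduct_Amat_mulVec_of_mem_Utilde hu, hx, dotProduct_one, mul_comm]
  exact (le_of_mul_le_mul_right hmass (sub_pos.2 hγ1)).trans hαsum

/-- The inner supremum `sup_{u ∈ Ũ(π)} uᵀ(Av − b)/(1−γ)` in the definition of `ρ̃(π)`, the worst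
Bellman residual of `v` over the approximate occupancy frequencies. As a real `sSup` it would be
`0` if `Ũ(π)` were empty. -/
noncomputable def worstResidual (P : S → A → S → ℝ) (r : S → A → ℝ) (α : S → ℝ) (γ : ℝ)
    (Φ : Matrix S K ℝ) (π : S → A → ℝ) (v : S → ℝ) : ℝ :=
  sSup ((fun u : S × A → ℝ => (∑ sa, u sa * ((Amat P γ *ᵥ v) sa - bvec r sa)) / (1 - γ)) ''
    Utilde P α γ Φ π)

theorem isPolicy.sub_worstResidual_le_ret (hπ : isPolicy π)
    (hP : ∀ s, IsSubstochastic (of (P s))) (hα : 0 ≤ α) (hαsum : ∑ s, α s ≤ 1) (hγ0 : 0 ≤ γ)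
    (hγ1 : γ < 1) (x : K → ℝ) :
    α ⬝ᵥ (Φ *ᵥ x) - worstResidual P r α γ Φ π (Φ *ᵥ x) ≤ ret P r α γ π := by
  have hu := hπ.uOcc_mem_Utilde hP hα hαsum hγ0 hγ1 Φ
  have hresidual : (∑ sa, uOcc P α γ π sa * ((Amat P γ *ᵥ (Φ *ᵥ x)) sa - bvec r sa)) / (1 - γ) =
      α ⬝ᵥ (Φ *ᵥ x) - ret P r α γ π := by
    rw [div_eq_iff (sub_pos.2 hγ1).ne']
    calc uOcc P α γ π ⬝ᵥ (Amat P γ *ᵥ (Φ *ᵥ x) - bvec r)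
        = (1 - γ) * (α ⬝ᵥ (Φ *ᵥ x)) - (1 - γ) * ret P r α γ π := by
          rw [dotProduct_sub, dotProduct_Amat_mulVec_of_mem_Utilde hu,
            hπ.uOcc_dotProduct_bvec hP hγ0 hγ1]
      _ = (α ⬝ᵥ (Φ *ᵥ x) - ret P r α γ π) * (1 - γ) := by ring
  rw [sub_le_comm, ← hresidual]
  exact le_csSup (bddAbove_image_Utilde hγ1 _) (Set.mem_image_of_mem _ hu)

theorem isPolicy.rhoTilde_le_ret (hπ : isPolicy π) (hP : ∀ s, IsSubstochastic (of (P s)))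
    (hα : 0 ≤ α) (hαsum : ∑ s, α s ≤ 1) (hγ0 : 0 ≤ γ) (hγ1 : γ < 1) :
    rhoTilde P r α γ Φ π ≤ ret P r α γ π :=
  ciSup_le (hπ.sub_worstResidual_le_ret hP hα hαsum hγ0 hγ1)

theorem isPolicy.sub_worstResidual_le_rhoTilde (hπ : isPolicy π)
    (hP : ∀ s, IsSubstochastic (of (P s))) (hα : 0 ≤ α) (hαsum : ∑ s, α s ≤ 1) (hγ0 : 0 ≤ γ)
    (hγ1 : γ < 1) (x : K → ℝ) :
    α ⬝ᵥ (Φ *ᵥ x) - worstResidual P r α γ Φ π (Φ *ᵥ x) ≤ rhoTilde P r α γ Φ π :=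
  le_ciSup (f := fun x => α ⬝ᵥ (Φ *ᵥ x) - worstResidual P r α γ Φ π (Φ *ᵥ x))
    ⟨_, Set.forall_mem_range.2 (hπ.sub_worstResidual_le_ret hP hα hαsum hγ0 hγ1)⟩ x

theorem isGreedy.worstResidual_detPol_le [DecidableEq A] (hp : isGreedy P r γ p v)
    (hP : ∀ s, IsSubstochastic (of (P s))) (hαsum : ∑ s, α s ≤ 1) (hγ0 : 0 ≤ γ) (hγ1 : γ < 1)
    (hone : ∃ x, Φ *ᵥ x = 1) (hε : 0 ≤ ε) (hv : ∀ s, v s - bell P r γ v s ≤ ε) :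
    worstResidual P r α γ Φ (detPol p) v ≤ ε / (1 - γ) := by
  have hγ : 0 ≤ 1 - γ := sub_nonneg.2 hγ1.le
  refine Real.sSup_le ?_ (div_nonneg hε hγ)
  rintro _ ⟨u, hu, rfl⟩
  refine div_le_div_of_nonneg_right ?_ hγ
  -- The constraint `u ≤ π` confines `u` to greedy actions, where the residual of `v` is `v - Lv`.
  have hterm (sa : S × A) : u sa * ((Amat P γ *ᵥ v) sa - bvec r sa) ≤ u sa * ε := by
    obtain ⟨s, a⟩ := sa
    by_cases ha : a = p s
    · subst ha
      rw [hp.Amat_mulVec_sub_bvec]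
      exact mul_le_mul_of_nonneg_left (hv s) (hu.1 _)
    · have hzero : u (s, a) = 0 := le_antisymm (by simpa [detPol, ha] using hu.2.2 (s, a)) (hu.1 _)
      simp [hzero]
  calc ∑ sa, u sa * ((Amat P γ *ᵥ v) sa - bvec r sa) ≤ ∑ sa, u sa * ε :=
        Finset.sum_le_sum fun sa _ => hterm sa
    _ = (∑ sa, u sa) * ε := (Finset.sum_mul ..).symm
    _ ≤ ε := mul_le_of_le_one_left hε (sum_le_one_of_mem_Utilde hP hαsum hγ0 hγ1 hone hu)

theorem isGreedy.dotProduct_sub_le_rhoTilde [DecidableEq A] {x : K → ℝ}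
    (hp : isGreedy P r γ p (Φ *ᵥ x)) (hP : ∀ s, IsSubstochastic (of (P s))) (hα : 0 ≤ α)
    (hαsum : ∑ s, α s ≤ 1) (hγ0 : 0 ≤ γ) (hγ1 : γ < 1) (hone : ∃ x, Φ *ᵥ x = 1) (hε : 0 ≤ ε)
    (hv : ∀ s, (Φ *ᵥ x) s - bell P r γ (Φ *ᵥ x) s ≤ ε) :
    α ⬝ᵥ (Φ *ᵥ x) - ε / (1 - γ) ≤ rhoTilde P r α γ Φ (detPol p) :=
  (sub_le_sub_left (hp.worstResidual_detPol_le hP hαsum hγ0 hγ1 hone hε hv) _).trans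
    ((isPolicy_detPol p).sub_worstResidual_le_rhoTilde hP hα hαsum hγ0 hγ1 x)

end RobustReturn

end DRADP

theorem dradp_loss_bound_Linf_general {S A K : Type*} [Fintype S] [Fintype A] [Fintype K]
    [Nonempty A] [DecidableEq S] [DecidableEq A]
    {P : S → A → S → ℝ} {r : S → A → ℝ} {α : S → ℝ} {γ : ℝ} {Φ : Matrix S K ℝ}
    (hP : ∀ s, IsSubstochastic (of (P s))) (hα : 0 ≤ α) (hαsum : ∑ s, α s ≤ 1)
    (hγ0 : 0 ≤ γ) (hγ1 : γ < 1) (hone : ∃ x : K → ℝ, Φ *ᵥ x = 1)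
    {vstar : S → ℝ} (hvstar : bell P r γ vstar = vstar)
    {x : K → ℝ} {p : S → A} (hp : isGreedy P r γ p (Φ *ᵥ x))
    {π : S → A → ℝ} (hπ : isPolicy π)
    (hopt : rhoTilde P r α γ Φ (detPol p) ≤ rhoTilde P r α γ Φ π) :
    ∑ s, α s * |vstar s - vVal P r γ π s|
      ≤ (2 / (1 - γ)) * ⨆ s : S, |(Φ *ᵥ x) s - bell P r γ (Φ *ᵥ x) s| := by
  set v := Φ *ᵥ x
  set ε := ⨆ s : S, |v s - bell P r γ v s|
  have hε : 0 ≤ ε := Real.iSup_nonneg fun _ => abs_nonneg _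
  have hv (s : S) : |v s - bell P r γ v s| ≤ ε :=
    le_ciSup (f := fun s => |v s - bell P r γ v s|) (Set.finite_range _).bddAbove s
  have hclose : α ⬝ᵥ vstar ≤ α ⬝ᵥ v + ε / (1 - γ) :=
    dotProduct_le_add_div_of_bell_eq hP hα hαsum hγ0 hγ1 hvstar hε fun s => by
      linarith [neg_le_of_abs_le (hv s)]
  have hreturn : α ⬝ᵥ v - ε / (1 - γ) ≤ ret P r α γ π :=
    calc α ⬝ᵥ v - ε / (1 - γ) ≤ rhoTilde P r α γ Φ (detPol p) :=
          hp.dotProduct_sub_le_rhoTilde hP hα hαsum hγ0 hγ1 hone hε fun s => le_of_abs_le (hv s)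
      _ ≤ rhoTilde P r α γ Φ π := hopt
      _ ≤ ret P r α γ π := hπ.rhoTilde_le_ret hP hα hαsum hγ0 hγ1
  calc ∑ s, α s * |vstar s - vVal P r γ π s| = α ⬝ᵥ vstar - ret P r α γ π :=
        hπ.sum_mul_abs_sub_vVal hP hγ0 hγ1 hvstar.le α
    _ ≤ ε / (1 - γ) + ε / (1 - γ) := by linarith
    _ = 2 / (1 - γ) * ε := by ring

/-- `L∞` error bound for the DRADP-optimal policy:
`‖v* − v_π̄‖_{1,α} ≤ (2/(1−γ))·‖v − Lv‖_∞` for every representable `v`. -/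
theorem dradp_loss_bound_Linf {S A K : Type*} [Fintype S] [Fintype A] [Fintype K]
    [Nonempty S] [Nonempty A] [DecidableEq S] [DecidableEq A]
    (P : S → A → S → ℝ) (r : S → A → ℝ) (α : S → ℝ) (γ : ℝ) (Φ : Matrix S K ℝ)
    (hP : ∀ s a s', 0 ≤ P s a s') (hPsum : ∀ s a, ∑ s', P s a s' = 1)
    (hα : ∀ s, 0 ≤ α s) (hαsum : ∑ s, α s = 1)
    (hγ0 : 0 ≤ γ) (hγ1 : γ < 1)
    (hone : ∃ x : K → ℝ, Φ *ᵥ x = fun _ => (1 : ℝ))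
    (vstar : S → ℝ) (hvstar : bell P r γ vstar = vstar)
    (Pset : Set (S → A → ℝ))
    (hG : greedySet P r γ Φ ⊆ Pset)
    (hR : Pset ⊆ {π | isPolicy π})
    (πb : S → A → ℝ) (hmem : πb ∈ Pset)
    (hopt : ∀ π ∈ Pset, rhoTilde P r α γ Φ π ≤ rhoTilde P r α γ Φ πb) :
    ∀ x : K → ℝ,
      ∑ s, α s * |vstar s - vVal P r γ πb s|
        ≤ (2 / (1 - γ)) * ⨆ s : S, |(Φ *ᵥ x) s - bell P r γ (Φ *ᵥ x) s| := by
  intro x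
  obtain ⟨p, hp⟩ := exists_isGreedy P r γ (Φ *ᵥ x)
  exact dradp_loss_bound_Linf_general (fun s => ⟨hP s, fun a => (hPsum s a).le⟩) hα hαsum.le hγ0 hγ1
    hone hvstar hp (hR hmem) (hopt _ (hG ⟨p, rfl, x, hp⟩))
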